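/- There exists a simplicial complex 𝒦₀ over an infinite set S such that for every ε > 0, the closed ball of radius ε around 𝒦₀ (for the distance d) contains an infinite sequence (𝒦_r)_{r≥1} of simplicial complexes with pairwise distances d(𝒦_r, 𝒦_s) ≥ δ for all r ≠ s, for some δ > 0 depending on ε. Consequently, the metric space of simplicial complexes over S with the distance d is not locally compact. -/

import Mathlib

open scoped BigOperators

/-- A simplicial complex over the vertex set `S`: a nonempty collection of
nonempty finite subsets of `S`, closed under taking nonempty subsets. -/
def IsSimplicialComplex {S : Type*} (K : Set (Finset S)) : Prop :=
  K.Nonempty ∧ (∀ F ∈ K, F.Nonempty) ∧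
    ∀ F ∈ K, ∀ G : Finset S, G.Nonempty → G ⊆ F → G ∈ K

/-- Halved ℓ¹ distance between finitely supported real functions:
`d(α,β) = (1/2) ∑ₛ |α s - β s|`. -/
noncomputable def l1dist {S : Type*} (α β : S →₀ ℝ) : ℝ :=
  (1 / 2) * (α - β).sum fun _ x => |x|

/-- The ℓ¹ geometric realization of a collection `K` of finite subsets of `S`:
finitely supported probability vectors whose support is a face of `K`. -/
def realization {S : Type*} (K : Set (Finset S)) : Set (S →₀ ℝ) :=
  {α | (∀ s, 0 ≤ α s) ∧ (α.sum fun _ x => x) = 1 ∧ α.support ∈ K}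

/-- Distance from a point to a set of finitely supported functions. -/
noncomputable def distToSet {S : Type*} (α : S →₀ ℝ) (X : Set (S →₀ ℝ)) : ℝ :=
  sInf (l1dist α '' X)

/-- One-sided Hausdorff distance between (the realizations of) two complexes. -/
noncomputable def hdelta {S : Type*} (K₁ K₂ : Set (Finset S)) : ℝ :=
  sSup ((fun α => distToSet α (realization K₂)) '' realization K₁)

/-- Hausdorff distance between (the realizations of) two simplicial complexes. -/
noncomputable def hdist {S : Type*} (K₁ K₂ : Set (Finset S)) : ℝ :=
  max (hdelta K₁ K₂) (hdelta K₂ K₁)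

/-- `d(F, K)`: supremum of distances to `|K|₁` over probability vectors
supported exactly on `F`. -/
noncomputable def dFace {S : Type*} (F : Finset S) (K : Set (Finset S)) : ℝ :=
  sSup ((fun α => distToSet α (realization K)) ''
    {α : S →₀ ℝ | (∀ s, 0 ≤ α s) ∧ (α.sum fun _ x => x) = 1 ∧ α.support = F})

/-- The `n`-skeleton of a simplicial complex. -/
def skeleton {S : Type*} (n : ℕ) (K : Set (Finset S)) : Set (Finset S) :=
  {F | F ∈ K ∧ F.card ≤ n + 1}


lemma l1dist_eq' {S : Type*} [DecidableEq S] (α β : S →₀ ℝ) (T : Finset S)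
    (hα : α.support ⊆ T) (hβ : β.support ⊆ T) :
    l1dist α β = (1 / 2) * ∑ s ∈ T, |α s - β s| := by
  unfold l1dist
  rw [Finsupp.sum_of_support_subset (s := T)]
  · simp
  · intro s hs
    by_contra h
    have h1 : α s = 0 := by
      by_contra h'
      exact h (hα (Finsupp.mem_support_iff.2 h'))
    have h2 : β s = 0 := by
      by_contra h'
      exact h (hβ (Finsupp.mem_support_iff.2 h'))
    simp [h1, h2] at hs
  · simp

lemma l1dist_nonneg' {S : Type*} (α β : S →₀ ℝ) : 0 ≤ l1dist α β := by
  unfold l1dist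
  have : 0 ≤ (α - β).sum fun _ x => |x| := Finset.sum_nonneg fun _ _ => abs_nonneg _
  linarith

lemma sum_eq' {S : Type*} (α : S →₀ ℝ) (T : Finset S) (hα : α.support ⊆ T) :
    (α.sum fun _ x => x) = ∑ s ∈ T, α s :=
  Finsupp.sum_of_support_subset _ hα _ (by simp)

lemma distToSet_le' {S : Type*} (α β : S →₀ ℝ) (X : Set (S →₀ ℝ)) (h : β ∈ X) :
    distToSet α X ≤ l1dist α β :=
  csInf_le ⟨0, by rintro _ ⟨γ, _, rfl⟩; exact l1dist_nonneg' _ _⟩ ⟨β, h, rfl⟩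

lemma l1dist_le_one' {S : Type*} {K L : Set (Finset S)} (α β : S →₀ ℝ)
    (hα : α ∈ realization K) (hβ : β ∈ realization L) : l1dist α β ≤ 1 := by
  classical
  obtain ⟨h1, h2, -⟩ := hα
  obtain ⟨h3, h4, -⟩ := hβ
  have ha : α.support ⊆ α.support ∪ β.support := Finset.subset_union_left
  have hb : β.support ⊆ α.support ∪ β.support := Finset.subset_union_right
  rw [sum_eq' _ _ ha] at h2
  rw [sum_eq' _ _ hb] at h4
  rw [l1dist_eq' α β _ ha hb]
  have : ∑ s ∈ α.support ∪ β.support, |α s - β s|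
      ≤ ∑ s ∈ α.support ∪ β.support, (α s + β s) := by
    refine Finset.sum_le_sum fun s _ => ?_
    rw [abs_le]
    constructor <;> linarith [h1 s, h3 s]
  rw [Finset.sum_add_distrib] at this
  linarith

lemma le_l1dist' {S : Type*} {K L : Set (Finset S)} (α β : S →₀ ℝ)
    (hα : α ∈ realization K) (hβ : β ∈ realization L) (a : S) (h : β a = 0) :
    α a ≤ l1dist α β := by
  classical
  obtain ⟨h1, h2, -⟩ := hα
  obtain ⟨h3, h4, -⟩ := hβ
  set T := insert a (α.support ∪ β.support) with hT
  have ha : α.support ⊆ T := fun x hx => by simp only [hT, Finset.mem_insert, Finset.mem_union]; tauto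
  have hb : β.support ⊆ T := fun x hx => by simp only [hT, Finset.mem_insert, Finset.mem_union]; tauto
  have haT : a ∈ T := Finset.mem_insert_self _ _
  rw [sum_eq' _ _ ha, ← Finset.add_sum_erase _ _ haT] at h2
  rw [sum_eq' _ _ hb, ← Finset.add_sum_erase _ _ haT] at h4
  rw [l1dist_eq' α β _ ha hb, ← Finset.add_sum_erase _ _ haT]
  have h5 := Finset.abs_sum_le_sum_abs (fun s => α s - β s) (T.erase a)
  rw [Finset.sum_sub_distrib] at h5
  have h6 := neg_abs_le (∑ s ∈ T.erase a, α s - ∑ s ∈ T.erase a, β s)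
  have h7 := le_abs_self (α a - β a)
  linarith

/-- Complex of all nonempty finite sets not containing `A`. -/
def avoid {S : Type*} (A : Finset S) : Set (Finset S) := {F | F.Nonempty ∧ ¬ A ⊆ F}

lemma avoid_complex {S : Type*} (A : Finset S) (h : 2 ≤ A.card) :
    IsSimplicialComplex (avoid A) := by
  refine ⟨?_, fun F hF => hF.1, fun F hF G hG hGF => ⟨hG, fun h => hF.2 (h.trans hGF)⟩⟩
  obtain ⟨a, ha⟩ := Finset.card_pos.1 (by omega : 0 < A.card)
  refine ⟨{a}, Finset.singleton_nonempty a, fun h' => ?_⟩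
  have := Finset.card_le_card h'
  simp at this
  omega

lemma dist_avoid {S : Type*} {K : Set (Finset S)} (A : Finset S) (h : 2 ≤ A.card) (α : S →₀ ℝ)
    (hα : α ∈ realization K) : distToSet α (realization (avoid A)) ≤ 1 / A.card := by
  classical
  obtain ⟨h1, h2, -⟩ := hα
  have hpos : (0 : ℝ) < A.card := by exact_mod_cast (by omega : 0 < A.card)
  obtain ⟨a, haA, ha⟩ : ∃ a ∈ A, α a ≤ 1 / A.card := by
    by_contra! hc
    have hne : A.Nonempty := Finset.card_pos.1 (by omega)
    have h3 := Finset.sum_lt_sum_of_nonempty hne hc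
    simp only [Finset.sum_const, nsmul_eq_mul] at h3
    rw [mul_one_div_cancel hpos.ne'] at h3
    rw [sum_eq' α (α.support ∪ A) Finset.subset_union_left] at h2
    have : ∑ s ∈ A, α s ≤ ∑ s ∈ α.support ∪ A, α s :=
      Finset.sum_le_sum_of_subset_of_nonneg Finset.subset_union_right fun s _ _ => h1 s
    linarith
  obtain ⟨b, hbA, hb⟩ := Finset.exists_mem_ne (by omega : 1 < A.card) a
  set c := α a with hc
  set β : S →₀ ℝ := α + Finsupp.single b c - Finsupp.single a c with hβ
  have hβa : β a = 0 := by simp [hβ, hb, hc]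
  have hsum : (β.sum fun _ x => x) = 1 := by
    rw [hβ, Finsupp.sum_sub_index (by intros; rfl), Finsupp.sum_add_index' (by simp) (by simp), h2]
    simp
  have hmem : β ∈ realization (avoid A) := by
    refine ⟨fun s => ?_, hsum, ?_, fun h' => ?_⟩
    · by_cases hs : s = a
      · rw [hs, hβa]
      · have h3 := h1 s
        have h4 := h1 a
        simp only [hβ, Finsupp.sub_apply, Finsupp.add_apply, Finsupp.single_apply, Ne.symm hs,
          if_false]
        split_ifs <;> linarith
    · rw [Finset.nonempty_iff_ne_empty]
      intro h0
      rw [Finsupp.support_eq_empty] at h0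
      rw [h0] at hsum
      simp at hsum
    · exact Finsupp.mem_support_iff.1 (h' haA) hβa
  refine (distToSet_le' _ _ _ hmem).trans (le_trans ?_ ha)
  have hsub : α - β = Finsupp.single a c - Finsupp.single b c := by
    rw [hβ]; abel
  unfold l1dist
  rw [hsub, Finsupp.sum_of_support_subset (s := {a, b})]
  · rw [Finset.sum_pair hb.symm]
    have : |c| = c := abs_of_nonneg (h1 a)
    simp [hb, hb.symm, this]
    linarith
  · intro s hs
    by_contra h'
    simp only [Finset.mem_insert, Finset.mem_singleton, not_or] at h'
    simp [Finsupp.single_apply, Ne.symm h'.1, Ne.symm h'.2] at hs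
  · simp

lemma avoid_sep {S : Type*} (A B : Finset S) (h : 2 ≤ A.card) (hAB : ¬ B ⊆ A) :
    (1 : ℝ) / A.card ≤ hdelta (avoid B) (avoid A) := by
  classical
  have hpos : (0 : ℝ) < A.card := by exact_mod_cast (by omega : 0 < A.card)
  have hAne : A.Nonempty := Finset.card_pos.1 (by omega)
  set α : S →₀ ℝ := Finsupp.onFinset A (fun s => if s ∈ A then (1 : ℝ) / A.card else 0)
    (by intro s hs; by_contra h'; simp [h'] at hs) with hα
  have hval : ∀ s ∈ A, α s = 1 / A.card := by
    intro s hs; simp [hα, hs]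
  have hsupp : α.support = A := by
    ext s
    simp only [hα, Finsupp.mem_support_iff, Finsupp.onFinset_apply]
    by_cases hs : s ∈ A
    · simp [hs, Finset.nonempty_iff_ne_empty.1 hAne]
    · simp [hs]
  have hmem : α ∈ realization (avoid B) := by
    refine ⟨fun s => ?_, ?_, ?_⟩
    · simp only [hα, Finsupp.onFinset_apply]
      split_ifs <;> positivity
    · rw [sum_eq' α A hsupp.le, Finset.sum_congr rfl hval]
      simp only [Finset.sum_const, nsmul_eq_mul]
      exact mul_one_div_cancel hpos.ne'
    · rw [hsupp]; exact ⟨hAne, hAB⟩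
  obtain ⟨a, ha⟩ := hAne
  have hδ : ∃ δ : S →₀ ℝ, δ ∈ realization (avoid A) := by
    refine ⟨Finsupp.single a 1, fun s => ?_, by simp, ?_⟩
    · rw [Finsupp.single_apply]; split_ifs <;> norm_num
    · rw [Finsupp.support_single_ne_zero _ one_ne_zero]
      refine ⟨Finset.singleton_nonempty a, fun h' => ?_⟩
      have := Finset.card_le_card h'
      simp at this
      omega
  have hbdd : BddAbove ((fun α => distToSet α (realization (avoid A))) '' realization (avoid B)) := by
    obtain ⟨δ, hδ⟩ := hδ
    refine ⟨1, ?_⟩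
    rintro _ ⟨γ, hγ, rfl⟩
    exact (distToSet_le' _ _ _ hδ).trans (l1dist_le_one' _ _ hγ hδ)
  refine le_trans ?_ (le_csSup hbdd ⟨α, hmem, rfl⟩)
  refine le_csInf (Set.Nonempty.image _ hδ) ?_
  rintro _ ⟨β, hβ, rfl⟩
  obtain ⟨x, hx, hxβ⟩ := Finset.not_subset.1 hβ.2.2.2
  rw [← hval x hx]
  exact le_l1dist' α β hmem hβ x (Finsupp.notMem_support_iff.1 hxβ)

/-- Over an infinite vertex set, the space of simplicial complexes with the
Hausdorff distance is not locally compact: there is a complex `𝒦₀` such that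
every closed `ε`-ball around it contains an infinite `δ`-separated sequence of
simplicial complexes, for some `δ > 0`. -/
theorem stmt17 {S : Type*} [Infinite S] :
    ∃ K₀ : Set (Finset S), IsSimplicialComplex K₀ ∧
      ∀ ε : ℝ, 0 < ε → ∃ δ : ℝ, 0 < δ ∧ ∃ Ks : ℕ → Set (Finset S),
        (∀ r, IsSimplicialComplex (Ks r)) ∧
        (∀ r, hdist K₀ (Ks r) ≤ ε) ∧
        (∀ r s, r ≠ s → δ ≤ hdist (Ks r) (Ks s)) := by
  classical
  refine ⟨{F | F.Nonempty}, ⟨?_, fun F hF => hF, fun F _ G hG _ => hG⟩, fun ε hε => ?_⟩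
  · obtain ⟨a⟩ : Nonempty S := inferInstance
    exact ⟨{a}, Finset.singleton_nonempty a⟩
  obtain ⟨m, hm⟩ := exists_nat_one_div_lt hε
  set n := m + 2 with hn
  have hnε : (1 : ℝ) / n ≤ ε := by
    refine le_trans ?_ hm.le
    apply one_div_le_one_div_of_le
    · positivity
    · rw [hn]; push_cast; linarith
  let e := Infinite.natEmbedding S
  let A : ℕ → Finset S := fun r => (Finset.Ico r (r + n)).map e
  have hA : ∀ r, (A r).card = n := fun r => by simp [A]
  have hA2 : ∀ r, 2 ≤ (A r).card := fun r => by rw [hA]; omega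
  refine ⟨1 / n, by positivity, fun r => avoid (A r), fun r => avoid_complex _ (hA2 r),
    fun r => max_le ?_ ?_, fun r s hrs => ?_⟩
  · refine Real.sSup_le ?_ hε.le
    rintro _ ⟨α, hα, rfl⟩
    refine (dist_avoid (A r) (hA2 r) α hα).trans ?_
    rw [hA]; exact hnε
  · refine Real.sSup_le ?_ hε.le
    rintro _ ⟨α, hα, rfl⟩
    have hm : α ∈ realization {F : Finset S | F.Nonempty} := ⟨hα.1, hα.2.1, hα.2.2.1⟩
    refine (distToSet_le' α α _ hm).trans ?_
    simp [l1dist, hε.le]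
  · refine le_trans ?_ (le_max_left _ _)
    rw [← hA s]
    refine avoid_sep _ _ (hA2 s) fun h => hrs ?_
    have h' := Finset.map_subset_map.1 h
    rw [Finset.Ico_subset_Ico_iff (by omega)] at h'
    omega
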